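/- The first multiset parameter of a binary search tree with one hole is the union of the hole multiset with the stored values: for every tree heap h, locations E, F and multisets of integers M₁, M₂, if bsthole(h, E, M₁, F, M₂) holds then M₁ = M₂ + values(h), where values(h) is the multiset of data values stored in h. -/

import Mathlib

/-- Locations are natural numbers; `0` plays the role of nil. -/
abbrev Loc : Type := ℕ

/-- A tree heap: finite partial map from locations to (left, right, data) triples. -/
abbrev TreeHeap : Type := Finmap (fun _ : Loc => Loc × Loc × ℤ)

/-- Binary search tree predicate `bst h E M`. -/
inductive bst : TreeHeap → Loc → Multiset ℤ → Prop
  | base (h : TreeHeap) (E : Loc) (M : Multiset ℤ) :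
      E = 0 → M = ∅ → h = ∅ → bst h E M
  | ind (h : TreeHeap) (E : Loc) (M : Multiset ℤ)
      (X Y : Loc) (v : ℤ) (M₁ M₂ : Multiset ℤ) (h₁ h₂ : TreeHeap) :
      (Finmap.singleton E (X, Y, v)).Disjoint h₁ →
      (Finmap.singleton E (X, Y, v)).Disjoint h₂ →
      h₁.Disjoint h₂ →
      h = Finmap.singleton E (X, Y, v) ∪ h₁ ∪ h₂ →
      bst h₁ X M₁ → bst h₂ Y M₂ →
      M = {v} + M₁ + M₂ →
      (∀ m ∈ M₁, m < v) → (∀ m ∈ M₂, v < m) →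
      bst h E M

/-- Binary search tree with one hole `bsthole h E M₁ F M₂`. -/
inductive bsthole : TreeHeap → Loc → Multiset ℤ → Loc → Multiset ℤ → Prop
  | base (h : TreeHeap) (E F : Loc) (M₁ M₂ : Multiset ℤ) :
      E = F → M₁ = M₂ → h = ∅ → bsthole h E M₁ F M₂
  | right (h : TreeHeap) (E F : Loc) (M₁ M₂ : Multiset ℤ)
      (X Y : Loc) (v : ℤ) (M₃ M₄ : Multiset ℤ) (h₁ h₂ : TreeHeap) :
      (Finmap.singleton E (X, Y, v)).Disjoint h₁ →
      (Finmap.singleton E (X, Y, v)).Disjoint h₂ →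
      h₁.Disjoint h₂ →
      h = Finmap.singleton E (X, Y, v) ∪ h₁ ∪ h₂ →
      bst h₁ X M₃ → bsthole h₂ Y M₄ F M₂ →
      M₁ = {v} + M₃ + M₄ →
      (∀ m ∈ M₃, m < v) → (∀ m ∈ M₄, v < m) →
      bsthole h E M₁ F M₂
  | left (h : TreeHeap) (E F : Loc) (M₁ M₂ : Multiset ℤ)
      (X Y : Loc) (v : ℤ) (M₃ M₄ : Multiset ℤ) (h₁ h₂ : TreeHeap) :
      (Finmap.singleton E (X, Y, v)).Disjoint h₁ →
      (Finmap.singleton E (X, Y, v)).Disjoint h₂ →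
      h₁.Disjoint h₂ →
      h = Finmap.singleton E (X, Y, v) ∪ h₁ ∪ h₂ →
      bsthole h₁ X M₃ F M₂ → bst h₂ Y M₄ →
      M₁ = {v} + M₃ + M₄ →
      (∀ m ∈ M₃, m < v) → (∀ m ∈ M₄, v < m) →
      bsthole h E M₁ F M₂

/-- The multiset of data values stored in a tree heap. -/
def values (h : TreeHeap) : Multiset ℤ :=
  h.entries.map (fun p => p.2.2.2)

section Finmap

variable {α : Type*} {β : α → Type*} {s t : Finmap β}

theorem mem_of_mem_entries {x : Sigma β} (hx : x ∈ s.entries) : x.1 ∈ s :=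
  Multiset.mem_map_of_mem Sigma.fst hx

theorem disjoint_entries_of_disjoint (hd : s.Disjoint t) : Disjoint s.entries t.entries :=
  Multiset.disjoint_left.2 fun hs ht => hd _ (mem_of_mem_entries hs) (mem_of_mem_entries ht)

theorem mem_entries_union [DecidableEq α] {x : Sigma β} :
    x ∈ (s ∪ t).entries ↔ x ∈ s.entries ∨ x.1 ∉ s ∧ x ∈ t.entries := by
  simpa only [Finmap.mem_lookup_iff] using
    Finmap.mem_lookup_union (a := x.1) (b := x.2) (s₁ := s) (s₂ := t)

theorem entries_union_of_disjoint [DecidableEq α] (hd : s.Disjoint t) :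
    (s ∪ t).entries = s.entries + t.entries := by
  have nodup_add : (s.entries + t.entries).Nodup :=
    Multiset.nodup_add.2 ⟨s.nodup_entries, t.nodup_entries, disjoint_entries_of_disjoint hd⟩
  refine ((s ∪ t).nodup_entries.ext nodup_add).2 fun x => ?_
  have notMem_left : x ∈ t.entries → x.1 ∉ s := fun hx hs => hd x.1 hs (mem_of_mem_entries hx)
  rw [mem_entries_union, and_iff_right_of_imp notMem_left, Multiset.mem_add]

end Finmap

theorem values_empty : values ∅ = 0 :=
  rfl

theorem values_singleton (E X Y : Loc) (v : ℤ) :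
    values (Finmap.singleton E (X, Y, v)) = {v} :=
  rfl

theorem values_union {h₁ h₂ : TreeHeap} (hd : h₁.Disjoint h₂) :
    values (h₁ ∪ h₂) = values h₁ + values h₂ := by
  rw [values, entries_union_of_disjoint hd, Multiset.map_add, values, values]

theorem values_node {E X Y : Loc} {v : ℤ} {h₁ h₂ : TreeHeap}
    (hd₁ : (Finmap.singleton E (X, Y, v)).Disjoint h₁)
    (hd₂ : (Finmap.singleton E (X, Y, v)).Disjoint h₂) (hd : h₁.Disjoint h₂) :
    values (Finmap.singleton E (X, Y, v) ∪ h₁ ∪ h₂) = {v} + values h₁ + values h₂ := by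
  rw [values_union ((Finmap.disjoint_union_left _ _ _).2 ⟨hd₂, hd⟩), values_union hd₁,
    values_singleton]

theorem bst.eq_values {h : TreeHeap} {E : Loc} {M : Multiset ℤ} (H : bst h E M) :
    M = values h := by
  induction H with
  | base h _ M _ hM hh =>
    rw [hM, hh, values_empty, Multiset.empty_eq_zero]
  | ind h _ M X Y v M₁ M₂ h₁ h₂ hd₁ hd₂ hd hh _ _ hM _ _ ih₁ ih₂ =>
    rw [hM, hh, values_node hd₁ hd₂ hd, ih₁, ih₂]

/-- The first multiset parameter of a binary search tree with one hole is the
union of the hole multiset with the stored values. -/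
theorem bsthole_values
    (h : TreeHeap) (E F : Loc) (M₁ M₂ : Multiset ℤ)
    (H : bsthole h E M₁ F M₂) :
    M₁ = M₂ + values h := by
  induction H with
  | base h _ _ M₁ M₂ _ hM hh =>
    rw [hM, hh, values_empty, add_zero]
  | right h _ _ M₁ M₂ X Y v M₃ M₄ h₁ h₂ hd₁ hd₂ hd hh hbst _ hM _ _ ih =>
    rw [hM, hh, values_node hd₁ hd₂ hd, hbst.eq_values, ih, add_left_comm]
  | left h _ _ M₁ M₂ X Y v M₃ M₄ h₁ h₂ hd₁ hd₂ hd hh _ hbst hM _ _ ih =>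
    rw [hM, hh, values_node hd₁ hd₂ hd, hbst.eq_values, ih]
    abel
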